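/- (Buchdahl-type inequality, Andréasson) Let m : [0,R] → ℝ with m(r) = 4π ∫₀^r η² ρ(η) dη for a static spherically symmetric solution with ρ, p, p_T ≥ 0 satisfying p + 2 p_T ≤ Ω ρ for some Ω > 0 and the static Einstein equations in Schwarzschild coordinates. Then for all r, 2m(r)/r ≤ ((1+2Ω)² - 1)/(1+2Ω)². -/

import Mathlib

lemma key_pos (Ω s A : ℝ) (hΩ : 0 < Ω) (hs : 0 < s) (hs1 : s ≤ 1)
    (hA : (2 + 2 * Ω) * s * (1 - s) < A) :
    0 < A ^ 2 + 2 * s ^ 2 * A - (2 + 2 * Ω) * s ^ 2 * (1 - s ^ 2) := by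
  have hB : 0 ≤ (2 + 2 * Ω) * s * (1 - s) := by
    have : 0 ≤ 1 - s := by linarith
    positivity
  set B := (2 + 2 * Ω) * s * (1 - s) with hBdef
  have h1 : 0 ≤ (2 + 2 * Ω) * s ^ 2 * ((1 + 2 * Ω) * (1 - s) ^ 2) := by positivity
  have h2 : B ^ 2 + 2 * s ^ 2 * B - (2 + 2 * Ω) * s ^ 2 * (1 - s ^ 2)
      = (2 + 2 * Ω) * s ^ 2 * ((1 + 2 * Ω) * (1 - s) ^ 2) := by
    rw [hBdef]; ring
  have h3 : 0 < (A - B) * (A + B + 2 * s ^ 2) := by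
    apply mul_pos (by linarith)
    have : 0 < s ^ 2 := by positivity
    linarith
  nlinarith

lemma alg_neg (Ω s x y T E : ℝ) (hΩ : 0 < Ω) (hs : 0 < s) (hs1 : s ≤ 1)
    (hx : x = 1 - s ^ 2) (hT : y + 2 * T ≤ Ω * E)
    (hc : (2 + 2 * Ω) * s < 1 + y + (1 + 2 * Ω) * s ^ 2) :
    2 * s ^ 2 * (2 * T - (x + y) / (2 * s ^ 2) * (E + y) - (1 + 2 * Ω) * (E - x))
      + (1 + y + (1 + 2 * Ω) * s ^ 2) * (E - x) < 0 := by
  have hk := key_pos Ω s (x + y) hΩ hs hs1 (by subst hx; nlinarith)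
  have e : 2 * s ^ 2 * (2 * T - (x + y) / (2 * s ^ 2) * (E + y) - (1 + 2 * Ω) * (E - x))
      = 2 * s ^ 2 * (2 * T - (1 + 2 * Ω) * (E - x)) - (x + y) * (E + y) := by
    field_simp
    ring
  rw [e]
  have h4 : 0 ≤ s ^ 2 * (Ω * E - (y + 2 * T)) := mul_nonneg (by positivity) (by linarith)
  subst hx
  nlinarith

lemma final_bound (Ω u y : ℝ) (hΩ : 0 < Ω) (hu : 0 < u) (hu1 : u ≤ 1) (hy : 0 ≤ y)
    (h : (1 + y + (1 + 2 * Ω) * u) / Real.sqrt u ≤ 2 + 2 * Ω) :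
    1 - u ≤ ((1 + 2 * Ω) ^ 2 - 1) / (1 + 2 * Ω) ^ 2 := by
  have hs : 0 < Real.sqrt u := Real.sqrt_pos.mpr hu
  have hsq : Real.sqrt u ^ 2 = u := Real.sq_sqrt hu.le
  have hs1 : Real.sqrt u ≤ 1 := Real.sqrt_le_iff.mpr ⟨by norm_num, by linarith⟩
  set s := Real.sqrt u
  rw [div_le_iff₀ hs, ← hsq] at h
  rw [← hsq, le_div_iff₀ (by positivity)]
  have h1 : 1 ≤ (1 + 2 * Ω) * s := by
    by_contra hlt
    push Not at hlt
    have : s < 1 := by nlinarith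
    have := mul_pos (sub_pos.mpr hlt) (sub_pos.mpr this)
    nlinarith
  nlinarith

/-- Andréasson's Buchdahl-type inequality: for a static spherically-symmetric
solution in Schwarzschild coordinates with nonnegative energy density `ρ`,
radial pressure `p` and tangential pressure `p_T` satisfying
`p + 2p_T ≤ Ω ρ`, the quasi-local mass `m(r) = 4π ∫₀^r η² ρ dη` satisfies
`2m(r)/r ≤ ((1+2Ω)² - 1)/(1+2Ω)²`. -/
theorem buchdahl_type_inequality
    (R Ω : ℝ) (hR : 0 < R) (hΩ : 0 < Ω)
    (ρ prad pT m μ : ℝ → ℝ)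
    (hρnn : ∀ r ∈ Set.Icc 0 R, 0 ≤ ρ r)
    (hpnn : ∀ r ∈ Set.Icc 0 R, 0 ≤ prad r)
    (hpTnn : ∀ r ∈ Set.Icc 0 R, 0 ≤ pT r)
    (hΩcond : ∀ r ∈ Set.Icc 0 R, prad r + 2 * pT r ≤ Ω * ρ r)
    (hρcont : ContinuousOn ρ (Set.Icc 0 R))
    (hm : ∀ r ∈ Set.Icc 0 R, m r = 4 * Real.pi * ∫ η in (0)..r, η ^ 2 * ρ η)
    (hhorizon : ∀ r ∈ Set.Ioc 0 R, 2 * m r < r)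
    (hμr : ∀ r ∈ Set.Ioc 0 R,
      HasDerivAt μ ((m r / r ^ 2 + 4 * Real.pi * r * prad r) / (1 - 2 * m r / r)) r)
    (hTOV : ∀ r ∈ Set.Ioc 0 R,
      HasDerivAt prad
        (-((m r / r ^ 2 + 4 * Real.pi * r * prad r) / (1 - 2 * m r / r))
            * (ρ r + prad r)
          + 2 * (pT r - prad r) / r) r) :
    ∀ r ∈ Set.Ioc 0 R,
      2 * m r / r ≤ ((1 + 2 * Ω) ^ 2 - 1) / (1 + 2 * Ω) ^ 2 := by
  intro r₁ hr₁
  have hpi := Real.pi_pos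
  -- a continuous extension of `ρ`
  set ρ' : ℝ → ℝ := Set.IccExtend hR.le ((Set.Icc 0 R).domRestrict ρ) with hρ'
  have hρ'c : Continuous ρ' := (continuousOn_iff_continuous_domRestrict.mp hρcont).Icc_extend'
  have hρ'e : ∀ r ∈ Set.Icc 0 R, ρ' r = ρ r := fun r hr => by
    rw [hρ', Set.IccExtend_of_mem _ _ hr]; rfl
  set F : ℝ → ℝ := fun r => 4 * Real.pi * ∫ η in (0)..r, η ^ 2 * ρ' η with hF
  have hgc : Continuous (fun η : ℝ => η ^ 2 * ρ' η) := by fun_prop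
  have hFd : ∀ r, HasDerivAt F (4 * Real.pi * (r ^ 2 * ρ' r)) r := fun r =>
    (intervalIntegral.integral_hasDerivAt_right (hgc.intervalIntegrable _ _)
      (hgc.stronglyMeasurableAtFilter _ _) hgc.continuousAt).const_mul _
  have hFm : ∀ r ∈ Set.Icc 0 R, m r = F r := fun r hr => by
    rw [hm r hr, hF]
    simp only
    congr 1
    apply intervalIntegral.integral_congr
    intro η hη
    rw [Set.uIcc_of_le hr.1] at hη
    simp only
    rw [hρ'e η ⟨hη.1, hη.2.trans hr.2⟩]
  have hFnn : ∀ r ∈ Set.Icc 0 R, 0 ≤ F r := fun r hr => by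
    have : 0 ≤ ∫ η in (0)..r, η ^ 2 * ρ' η := by
      apply intervalIntegral.integral_nonneg hr.1
      intro η hη
      have hη' : η ∈ Set.Icc 0 R := ⟨hη.1, hη.2.trans hr.2⟩
      rw [hρ'e η hη']
      have := hρnn η hη'
      positivity
    simp only [hF]
    positivity
  have hIoc : ∀ {r}, r ∈ Set.Ioc 0 R → r ∈ Set.Icc 0 R := fun h => ⟨h.1.le, h.2⟩
  set u : ℝ → ℝ := fun r => 1 - 2 * F r / r with hu
  set y : ℝ → ℝ := fun r => 8 * Real.pi * r ^ 2 * prad r with hy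
  set c : ℝ → ℝ := fun r => (1 + y r + (1 + 2 * Ω) * u r) / Real.sqrt (u r) with hc
  have hupos : ∀ r ∈ Set.Ioc 0 R, 0 < u r := fun r hr => by
    have h := hhorizon r hr
    rw [hFm r (hIoc hr)] at h
    have : 2 * F r / r < 1 := by rw [div_lt_one hr.1]; exact h
    simp only [hu]; linarith
  have hule : ∀ r ∈ Set.Ioc 0 R, u r ≤ 1 := fun r hr => by
    have h := hFnn r (hIoc hr)
    have h0 := hr.1
    have : 0 ≤ 2 * F r / r := by positivity
    simp only [hu]; linarith
  have hynn : ∀ r ∈ Set.Ioc 0 R, 0 ≤ y r := fun r hr => by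
    have h := hpnn r (hIoc hr)
    simp only [hy]; positivity
  -- derivative of `c`
  have hcd : ∀ r ∈ Set.Ioc 0 R, ∃ c', HasDerivAt c c' r ∧ (2 + 2 * Ω < c r → c' < 0) := by
    intro r hr
    have hr0 := hr.1
    have hrne : r ≠ 0 := hr0.ne'
    have hud : HasDerivAt u (-((8 * Real.pi * r ^ 2 * ρ r - (1 - u r)) / r)) r := by
      have h := (((hFd r).const_mul 2).div (hasDerivAt_id r) hrne).const_sub 1
      refine h.congr_deriv ?_
      rw [hρ'e r (hIoc hr)]
      simp only [hu, id]
      field_simp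
      ring
    have hyd : HasDerivAt y ((2 * (8 * Real.pi * r ^ 2 * pT r)
        - ((1 - u r) + y r) / (2 * u r) * (8 * Real.pi * r ^ 2 * ρ r + y r)) / r) r := by
      have h := (((hasDerivAt_id r).pow 2).const_mul (8 * Real.pi)).mul (hTOV r hr)
      refine h.congr_deriv ?_
      have hu0 := (hupos r hr).ne'
      rw [hFm r (hIoc hr)]
      have e1 : F r = r * (1 - u r) / 2 := by simp only [hu]; field_simp; ring
      have e2 : 1 - 2 * F r / r = u r := rfl
      rw [e2, e1]
      simp only [hy, id, Pi.pow_apply]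
      generalize u r = v at *
      field_simp
      ring
    have hsd := hud.sqrt (hupos r hr).ne'
    have hspos : 0 < Real.sqrt (u r) := Real.sqrt_pos.mpr (hupos r hr)
    have hcD := ((hyd.const_add 1).add (hud.const_mul (1 + 2 * Ω))).div hsd hspos.ne'
    refine ⟨_, hcD, fun hlt => ?_⟩
    have hsq : Real.sqrt (u r) ^ 2 = u r := Real.sq_sqrt (hupos r hr).le
    have hs1 : Real.sqrt (u r) ≤ 1 := 
      Real.sqrt_le_iff.mpr ⟨by norm_num, by linarith [hule r hr]⟩
    simp only [hc] at hlt
    rw [lt_div_iff₀ hspos] at hlt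
    have hΩr := hΩcond r (hIoc hr)
    have hT : y r + 2 * (8 * Real.pi * r ^ 2 * pT r) ≤ Ω * (8 * Real.pi * r ^ 2 * ρ r) := by
      have : 0 ≤ 8 * Real.pi * r ^ 2 := by positivity
      have := mul_le_mul_of_nonneg_left hΩr this
      simp only [hy]; linarith
    simp only [Pi.add_apply]
    clear hcD hsd hyd hud
    generalize y r = Y at *
    generalize 8 * Real.pi * r ^ 2 * pT r = T at *
    generalize 8 * Real.pi * r ^ 2 * ρ r = E at *
    generalize Real.sqrt (u r) = s at *
    rw [← hsq] at hlt ⊢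
    have := alg_neg Ω s (1 - s ^ 2) Y T E hΩ hspos hs1 rfl hT hlt
    have hpos : 0 < 2 * r * s ^ 3 := by positivity
    have key := div_neg_of_neg_of_pos this hpos
    refine lt_of_eq_of_lt ?_ key
    field_simp
    ring
  have hlim : Filter.Tendsto c (nhdsWithin 0 (Set.Ioi 0)) (nhds (2 + 2 * Ω)) := by
    have hx : Filter.Tendsto u (nhdsWithin 0 (Set.Ioi 0)) (nhds 1) := by
      have h := (hasDerivAt_iff_tendsto_slope_zero.mp (hFd 0)).mono_left
        (nhdsWithin_mono (0:ℝ) (fun x (hx : 0 < x) => ne_of_gt hx) : nhdsWithin (0:ℝ) (Set.Ioi 0) ≤ _)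
      have h' := (h.const_mul 2).const_sub 1
      have hF0 : F 0 = 0 := by simp [hF]
      simp only [zero_add, hF0, sub_zero, smul_eq_mul] at h'
      convert h' using 2
      · simp only [hu]; ring
      · ring
    have hyl : Filter.Tendsto y (nhdsWithin 0 (Set.Ioi 0)) (nhds 0) := by
      have hb : Continuous (fun r : ℝ => 8 * Real.pi * r ^ 2 * (Ω * ρ' r)) := by fun_prop
      have hb' : Filter.Tendsto (fun r : ℝ => 8 * Real.pi * r ^ 2 * (Ω * ρ' r))
          (nhdsWithin 0 (Set.Ioi 0)) (nhds 0) := by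
        have := (hb.tendsto 0).mono_left (nhdsWithin_le_nhds (s := Set.Ioi 0))
        simpa using this
      have hev : ∀ᶠ r in nhdsWithin (0:ℝ) (Set.Ioi 0), r ∈ Set.Ioc 0 R :=
        Ioc_mem_nhdsGT hR
      refine tendsto_of_tendsto_of_tendsto_of_le_of_le' tendsto_const_nhds hb' ?_ ?_
      · filter_upwards [hev] with r hr using hynn r hr
      · filter_upwards [hev] with r hr
        rw [hρ'e r (hIoc hr)]
        have h1 := hΩcond r (hIoc hr)
        have h2 := hpTnn r (hIoc hr)
        simp only [hy]
        apply mul_le_mul_of_nonneg_left (by linarith) (by positivity)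
    have h := ((hyl.const_add 1).add (hx.const_mul (1 + 2 * Ω))).div
      ((Real.continuous_sqrt.tendsto 1).comp hx) (by simp)
    have e : 2 + 2 * Ω = (1 + 0 + (1 + 2 * Ω) * 1) / Real.sqrt 1 := by
      rw [Real.sqrt_one]; ring
    rw [e]
    exact h
  have hcle : c r₁ ≤ 2 + 2 * Ω := by
    apply le_of_forall_pos_le_add
    intro δ hδ
    have hev : ∀ᶠ r in nhdsWithin (0:ℝ) (Set.Ioi 0), r ∈ Set.Ioc 0 r₁ := Ioc_mem_nhdsGT hr₁.1
    obtain ⟨a, ha, hac⟩ := (hev.and (hlim.eventually_lt_const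
      (show 2 + 2 * Ω < 2 + 2 * Ω + δ by linarith))).exists
    have hsub : ∀ x ∈ Set.Icc a r₁, x ∈ Set.Ioc 0 R := fun x hx =>
      ⟨ha.1.trans_le hx.1, hx.2.trans hr₁.2⟩
    have hder : ∀ x ∈ Set.Icc a r₁, HasDerivAt c (deriv c x) x ∧
        (2 + 2 * Ω < c x → deriv c x < 0) := fun x hx => by
      obtain ⟨c', h1, h2⟩ := hcd x (hsub x hx)
      rw [h1.deriv]; exact ⟨h1, h2⟩
    refine image_le_of_deriv_right_lt_deriv_boundary (f := c) (f' := deriv c)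
      (B := fun _ => 2 + 2 * Ω + δ) (B' := fun _ => 0) (a := a) (b := r₁)
      (fun x hx => (hder x hx).1.continuousAt.continuousWithinAt)
      (fun x hx => (hder x ⟨hx.1, hx.2.le⟩).1.hasDerivWithinAt) hac.le
      (fun x => hasDerivAt_const _ _) ?_ ⟨ha.2, le_rfl⟩
    intro x hx hxe
    exact (hder x ⟨hx.1, hx.2.le⟩).2 (by rw [hxe]; linarith)
  have hfin := final_bound Ω (u r₁) (y r₁) hΩ (hupos r₁ hr₁) (hule r₁ hr₁) (hynn r₁ hr₁) hcle
  rw [hFm r₁ (hIoc hr₁)]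
  simpa [hu] using hfin
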